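/- Let L be a nonempty compact subset of (0,∞) with 1 ∈ L. For (k,l) ∈ ℤ² let g_{k,l} : L → ℝ be the continuous function g_{k,l}(t) = t^k − t^l. Then the real linear span of {g_{k,l} : (k,l) ∈ ℤ²} is dense, with respect to the supremum norm, in the space {h ∈ C(L,ℝ) : h(1) = 0} of continuous real-valued functions on L vanishing at 1. -/

import Mathlib

/-!
The functions `t ^ i - t ^ 0` with `i : ℕ` already span a dense subspace. By Stone–Weierstrass on
the compact set `L`, some polynomial `P` is within `ε / 2` of `h` on `L`. Since `h 1 = 0`, the value
`P(1)` is at most `ε / 2` in absolute value, so `P - P(1)` is within `ε` of `h`; and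
`P(t) - P(1) = ∑ aᵢ (t ^ i - t ^ 0)` lies in the span.
-/

/-- The map `t ↦ P(t) - P(1)` is the combination of the `t ^ i - t ^ 0` with the coefficients
of `P`. -/
lemma eval_sub_eval_one_mem_span (P : Polynomial ℝ) :
    (fun t : ℝ => P.eval t - P.eval 1) ∈
      Submodule.span ℝ {q : ℝ → ℝ | ∃ k l : ℤ, q = fun t : ℝ => t ^ k - t ^ l} := by
  have key : (fun t : ℝ => P.eval t - P.eval 1) =
      ∑ i ∈ Finset.range (P.natDegree + 1),
        P.coeff i • (fun t : ℝ => t ^ (i : ℤ) - t ^ (0 : ℤ)) := by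
    funext t
    simp [Polynomial.eval_eq_sum_range, Finset.sum_apply, mul_sub, Finset.sum_sub_distrib]
  rw [key]
  exact Submodule.sum_mem _ fun i _ =>
    Submodule.smul_mem _ _ (Submodule.subset_span ⟨i, 0, rfl⟩)

/-- Let `L` be a nonempty compact subset of `(0,∞)` with `1 ∈ L`.
For `(k,l) ∈ ℤ²` let `g_{k,l}(t) = t^k − t^l`.  Then the real linear span of the
functions `g_{k,l}` is dense, in the supremum norm, in the space of continuous
real-valued functions on `L` vanishing at `1`. -/
theorem span_of_power_differences_dense
    (L : Set ℝ) (hLcomp : IsCompact L) (hLne : L.Nonempty)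
    (hLpos : L ⊆ Set.Ioi (0 : ℝ)) (hL1 : (1 : ℝ) ∈ L)
    (h : ℝ → ℝ) (hhcont : ContinuousOn h L) (hh1 : h 1 = 0)
    (ε : ℝ) (hε : 0 < ε) :
    ∃ p ∈ Submodule.span ℝ {q : ℝ → ℝ | ∃ k l : ℤ, q = fun t : ℝ => t ^ k - t ^ l},
      ∀ t ∈ L, |p t - h t| ≤ ε := by
  have : CompactSpace L := isCompact_iff_compactSpace.mp hLcomp
  obtain ⟨⟨g, P, _, hg⟩, hgh⟩ :=
    ContinuousMap.exists_mem_subalgebra_near_continuous_of_separatesPoints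
      (polynomialFunctions L) (polynomialFunctions_separatesPoints L)
      (fun x : L => h x) hhcont.domRestrict (ε / 2) (half_pos hε)
  have near : ∀ t ∈ L, |P.eval t - h t| < ε / 2 := fun t ht => by
    simpa [← hg, Real.norm_eq_abs] using hgh ⟨t, ht⟩
  refine ⟨_, eval_sub_eval_one_mem_span P, fun t ht => ?_⟩
  have h₁ := abs_lt.mp (near t ht)
  have h₂ := abs_lt.mp (near 1 hL1)
  rw [hh1] at h₂
  rw [abs_le]
  constructor <;> linarith [h₁.1, h₁.2, h₂.1, h₂.2]
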